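/- Let F and G be cumulative distribution functions of probability measures on ℝ and let p > 1. Then, as an identity in [0,∞], ∫₀¹ |F^{-1}(u) − G^{-1}(u)|^p du = p(p−1) ∫_{ℝ²} 1_{x<y} ( [G(x)−F(y)]⁺ + [F(x)−G(y)]⁺ ) (y−x)^{p−2} dx dy, where z⁺ = max(z,0). -/

import Mathlib

open MeasureTheory Set Filter Topology
open scoped ENNReal

noncomputable section

/-- The cumulative distribution function `H * μ` of a measure `μ` on `ℝ`. -/
def cdfOf (μ : MeasureTheory.Measure ℝ) : ℝ → ℝ := fun x => (μ (Set.Iic x)).toReal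

/-- Pseudo-inverse of a cdf: `F⁻¹(u) = inf {x | F x > u}`. -/
def pinv (F : ℝ → ℝ) (u : ℝ) : ℝ := sInf {x : ℝ | u < F x}

/-!
For `c ≤ d`, integrating the kernel `p (p - 1) (y - x) ^ (p - 2)` over the triangle
`c < x < y < d` gives `(d - c) ^ p`; this is applied with `c = G⁻¹(u)` and `d = F⁻¹(u)`, and with
the roles of `F` and `G` exchanged when `F⁻¹(u) < G⁻¹(u)`. For fixed `u` and almost every `(x, y)`,
the condition `G⁻¹(u) < x` and `y < F⁻¹(u)` says `F y ≤ u < G x`, so Tonelli turns the integral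
over `u` into the length `[G x - F y]⁺` of the interval `[F y, G x)`.
-/

theorem ofReal_abs_rpow_eq_add {p : ℝ} (hp : p ≠ 0) (z : ℝ) :
    ENNReal.ofReal (|z| ^ p) =
      ENNReal.ofReal (max z 0 ^ p) + ENNReal.ofReal (max (-z) 0 ^ p) := by
  rcases le_total 0 z with hz | hz <;> simp [hz, hp, abs_of_nonneg, abs_of_nonpos]

theorem ofReal_max_add_max_mul {w : ℝ} (hw : 0 ≤ w) (s t : ℝ) :
    ENNReal.ofReal ((max s 0 + max t 0) * w) =
      ENNReal.ofReal s * ENNReal.ofReal w + ENNReal.ofReal t * ENNReal.ofReal w := by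
  rw [ENNReal.ofReal_mul' hw, ENNReal.ofReal_add (le_max_right s 0) (le_max_right t 0), add_mul]
  simp

theorem setLIntegral_Ioo_ofReal_eq_intervalIntegral {f : ℝ → ℝ} {c d : ℝ} (hcd : c ≤ d)
    (hf : IntervalIntegrable f volume c d) (hf_nonneg : ∀ x ∈ Ioo c d, 0 ≤ f x) :
    ∫⁻ x in Ioo c d, ENNReal.ofReal (f x) = ENNReal.ofReal (∫ x in c..d, f x) := by
  rw [intervalIntegral.integral_of_le hcd, integral_Ioc_eq_integral_Ioo,
    ofReal_integral_eq_lintegral_ofReal ((intervalIntegrable_iff_integrableOn_Ioo_of_le hcd).1 hf)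
      (ae_restrict_of_forall_mem measurableSet_Ioo hf_nonneg)]

theorem setLIntegral_Ioo_rpow_sub_right {r c d : ℝ} (hr : -1 < r) (hcd : c ≤ d) :
    ∫⁻ y in Ioo c d, ENNReal.ofReal ((y - c) ^ r) =
      ENNReal.ofReal ((d - c) ^ (r + 1) / (r + 1)) := by
  have h_integrable : IntervalIntegrable (fun y : ℝ ↦ (y - c) ^ r) volume c d := by
    simpa using
      (intervalIntegral.intervalIntegrable_rpow' (a := 0) (b := d - c) hr).comp_sub_right c
  rw [setLIntegral_Ioo_ofReal_eq_intervalIntegral hcd h_integrable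
      fun y hy ↦ Real.rpow_nonneg (sub_nonneg.2 hy.1.le) r,
    intervalIntegral.integral_comp_sub_right (· ^ r), integral_rpow (.inl hr), sub_self,
    Real.zero_rpow (by linarith), sub_zero]

theorem setLIntegral_Ioo_rpow_sub_left {r c d : ℝ} (hr : -1 < r) (hcd : c ≤ d) :
    ∫⁻ x in Ioo c d, ENNReal.ofReal ((d - x) ^ r) =
      ENNReal.ofReal ((d - c) ^ (r + 1) / (r + 1)) := by
  have h_integrable : IntervalIntegrable (fun x : ℝ ↦ (d - x) ^ r) volume c d := by
    simpa using
      ((intervalIntegral.intervalIntegrable_rpow' (a := 0) (b := d - c) hr).comp_sub_left d).symm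
  rw [setLIntegral_Ioo_ofReal_eq_intervalIntegral hcd h_integrable
      fun x hx ↦ Real.rpow_nonneg (sub_nonneg.2 hx.2.le) r,
    intervalIntegral.integral_comp_sub_left (· ^ r), integral_rpow (.inl hr), sub_self,
    Real.zero_rpow (by linarith), sub_zero]

/-- The open triangle `c < x < y < d` in the plane; it is empty when `d ≤ c`. -/
def openTriangle (c d : ℝ) : Set (ℝ × ℝ) := {q | c < q.1 ∧ q.1 < q.2 ∧ q.2 < d}

theorem measurableSet_openTriangle (c d : ℝ) : MeasurableSet (openTriangle c d) :=
  (measurableSet_lt measurable_const measurable_fst).inter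
    ((measurableSet_lt measurable_fst measurable_snd).inter
      (measurableSet_lt measurable_snd measurable_const))

theorem setLIntegral_openTriangle {f : ℝ × ℝ → ℝ≥0∞} (hf : Measurable f) (c d : ℝ) :
    ∫⁻ q in openTriangle c d, f q = ∫⁻ x in Ioo c d, ∫⁻ y in Ioo x d, f (x, y) := by
  have hslice (x y : ℝ) : (openTriangle c d).indicator f (x, y) =
      (Ioo c d).indicator (fun x ↦ (Ioo x d).indicator (fun y ↦ f (x, y)) y) x := by
    simp only [openTriangle, indicator_apply, mem_ofPred_eq, mem_Ioo]
    grind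
  have htri := measurableSet_openTriangle c d
  rw [← lintegral_indicator htri, Measure.volume_eq_prod,
    lintegral_prod _ (hf.indicator htri).aemeasurable, ← lintegral_indicator measurableSet_Ioo]
  refine lintegral_congr fun x ↦ ?_
  simp only [hslice]
  by_cases hx : x ∈ Ioo c d
  · simp only [indicator_of_mem hx, lintegral_indicator measurableSet_Ioo]
  · simp only [indicator_of_notMem hx, lintegral_zero]

theorem setLIntegral_openTriangle_rpow {r : ℝ} (hr : -1 < r) (c d : ℝ) :
    ∫⁻ q in openTriangle c d, ENNReal.ofReal ((q.2 - q.1) ^ r) =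
      ENNReal.ofReal (max (d - c) 0 ^ (r + 2) / ((r + 1) * (r + 2))) := by
  rw [setLIntegral_openTriangle (by fun_prop)]
  rcases le_total d c with hdc | hcd
  · simp [Ioo_eq_empty_of_le hdc, max_eq_right (sub_nonpos.2 hdc),
      Real.zero_rpow (show r + 2 ≠ 0 by linarith)]
  calc ∫⁻ x in Ioo c d, ∫⁻ y in Ioo x d, ENNReal.ofReal ((y - x) ^ r)
      = ∫⁻ x in Ioo c d, ENNReal.ofReal ((d - x) ^ (r + 1)) * ENNReal.ofReal (r + 1)⁻¹ := by
        refine setLIntegral_congr_fun measurableSet_Ioo fun x hx ↦ ?_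
        rw [setLIntegral_Ioo_rpow_sub_right hr hx.2.le, div_eq_mul_inv,
          ENNReal.ofReal_mul (Real.rpow_nonneg (sub_nonneg.2 hx.2.le) _)]
    _ = ENNReal.ofReal ((d - c) ^ (r + 2) / (r + 2)) * ENNReal.ofReal (r + 1)⁻¹ := by
        rw [lintegral_mul_const _ (by fun_prop),
          setLIntegral_Ioo_rpow_sub_left (by linarith) hcd, show r + 1 + 1 = r + 2 by ring]
    _ = ENNReal.ofReal (max (d - c) 0 ^ (r + 2) / ((r + 1) * (r + 2))) := by
        rw [← ENNReal.ofReal_mul' (inv_nonneg.2 (by linarith)), max_eq_left (sub_nonneg.2 hcd),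
          ← div_eq_mul_inv, div_div, mul_comm (r + 2)]

/-- `F` increases from the limit `a` at `-∞` to the limit `b` at `+∞`. Right-continuity is not
imposed, so distribution functions are covered under either continuity convention. -/
structure IsDistributionFunction (F : ℝ → ℝ) (a b : ℝ) : Prop where
  monotone : Monotone F
  tendsto_atBot : Tendsto F atBot (𝓝 a)
  tendsto_atTop : Tendsto F atTop (𝓝 b)

namespace IsDistributionFunction

variable {F G : ℝ → ℝ} {a b u : ℝ}

theorem bddBelow_superlevel (hF : IsDistributionFunction F a b) (hu : a < u) :
    BddBelow {x | u < F x} := by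
  obtain ⟨z, hz⟩ := (hF.tendsto_atBot.eventually_lt_const hu).exists
  exact ⟨z, fun _ hx ↦ (hF.monotone.reflect_lt (hz.trans hx)).le⟩

theorem nonempty_superlevel (hF : IsDistributionFunction F a b) (hu : u < b) :
    {x | u < F x}.Nonempty :=
  (hF.tendsto_atTop.eventually_const_lt hu).exists

theorem lt_apply_iff_pinv_lt (hF : IsDistributionFunction F a b) (hu : u ∈ Ioo a b) {x : ℝ}
    (hx : x ≠ pinv F u) : u < F x ↔ pinv F u < x := by
  constructor
  · exact fun h ↦ lt_of_le_of_ne (csInf_le (hF.bddBelow_superlevel hu.1) h) hx.symm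
  · intro h
    obtain ⟨y, hy, hyx⟩ := exists_lt_of_csInf_lt (hF.nonempty_superlevel hu.2) h
    exact lt_of_lt_of_le hy (hF.monotone hyx.le)

theorem monotoneOn_pinv (hF : IsDistributionFunction F a b) : MonotoneOn (pinv F) (Ioo a b) :=
  fun _ hu _ hv huv ↦ csInf_le_csInf (hF.bddBelow_superlevel hu.1) (hF.nonempty_superlevel hv.2)
    fun _ hx ↦ lt_of_le_of_lt huv hx

theorem aemeasurable_pinv (hF : IsDistributionFunction F a b) :
    AEMeasurable (pinv F) (volume.restrict (Ioo a b)) :=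
  aemeasurable_restrict_of_monotoneOn measurableSet_Ioo hF.monotoneOn_pinv

theorem setLIntegral_openTriangle_pinv (hF : IsDistributionFunction F a b)
    (hG : IsDistributionFunction G a b) (hu : u ∈ Ioo a b) (k : ℝ × ℝ → ℝ≥0∞) :
    ∫⁻ q in openTriangle (pinv G u) (pinv F u), k q =
      ∫⁻ q in {q : ℝ × ℝ | q.1 < q.2}, (Ico (F q.2) (G q.1)).indicator (fun _ ↦ k q) u := by
  rw [← lintegral_indicator (measurableSet_openTriangle _ _),
    ← lintegral_indicator (measurableSet_lt measurable_fst measurable_snd)]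
  have hfst : ∀ᵐ q : ℝ × ℝ, q.1 ≠ pinv G u :=
    Measure.quasiMeasurePreserving_fst.ae (Measure.ae_ne volume _)
  have hsnd : ∀ᵐ q : ℝ × ℝ, q.2 ≠ pinv F u :=
    Measure.quasiMeasurePreserving_snd.ae (Measure.ae_ne volume _)
  refine lintegral_congr_ae ?_
  filter_upwards [hfst, hsnd] with q hq₁ hq₂
  have hF_iff : F q.2 ≤ u ↔ q.2 < pinv F u := by
    rw [← not_lt, hF.lt_apply_iff_pinv_lt hu hq₂, not_lt, le_iff_lt_or_eq, or_iff_left hq₂]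
  have hG_iff : u < G q.1 ↔ pinv G u < q.1 := hG.lt_apply_iff_pinv_lt hu hq₁
  simp only [openTriangle, indicator_apply, mem_ofPred_eq, mem_Ico, hF_iff, hG_iff]
  grind

theorem setLIntegral_indicator_Ico (hF : IsDistributionFunction F a b)
    (hG : IsDistributionFunction G a b) (x y : ℝ) (c : ℝ≥0∞) :
    ∫⁻ u in Ioo a b, (Ico (F y) (G x)).indicator (fun _ ↦ c) u =
      ENNReal.ofReal (G x - F y) * c := by
  have hsub : Ico (F y) (G x) ⊆ Ico a b :=
    Ico_subset_Ico (hF.monotone.le_of_tendsto hF.tendsto_atBot y)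
      (hG.monotone.ge_of_tendsto hG.tendsto_atTop x)
  rw [setLIntegral_congr Ioo_ae_eq_Ico, setLIntegral_indicator measurableSet_Ico,
    inter_eq_left.2 hsub, setLIntegral_const, Real.volume_Ico, mul_comm]

theorem lintegral_setLIntegral_openTriangle_pinv (hF : IsDistributionFunction F a b)
    (hG : IsDistributionFunction G a b) {k : ℝ × ℝ → ℝ≥0∞} (hk : Measurable k) :
    ∫⁻ u in Ioo a b, ∫⁻ q in openTriangle (pinv G u) (pinv F u), k q =
      ∫⁻ q in {q : ℝ × ℝ | q.1 < q.2}, ENNReal.ofReal (G q.1 - F q.2) * k q := by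
  have hF_meas := hF.monotone.measurable
  have hG_meas := hG.monotone.measurable
  have hset : MeasurableSet {w : ℝ × ℝ × ℝ | w.1 ∈ Ico (F w.2.2) (G w.2.1)} :=
    (measurableSet_le (hF_meas.comp measurable_snd.snd) measurable_fst).inter
      (measurableSet_lt measurable_fst (hG_meas.comp measurable_snd.fst))
  have hmeas : Measurable (Function.uncurry fun (u : ℝ) (q : ℝ × ℝ) ↦
      (Ico (F q.2) (G q.1)).indicator (fun _ ↦ k q) u) :=
    (hk.comp measurable_snd).indicator hset
  rw [setLIntegral_congr_fun measurableSet_Ioo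
      fun u hu ↦ setLIntegral_openTriangle_pinv hF hG hu k,
    lintegral_lintegral_swap hmeas.aemeasurable]
  exact lintegral_congr fun q ↦ setLIntegral_indicator_Ico hF hG q.1 q.2 (k q)

theorem lintegral_max_pinv_sub_rpow (hF : IsDistributionFunction F a b)
    (hG : IsDistributionFunction G a b) {p : ℝ} (hp : 1 < p) :
    ∫⁻ u in Ioo a b, ENNReal.ofReal (max (pinv F u - pinv G u) 0 ^ p) =
      ENNReal.ofReal (p * (p - 1)) *
        ∫⁻ q in {q : ℝ × ℝ | q.1 < q.2},
          ENNReal.ofReal (G q.1 - F q.2) * ENNReal.ofReal ((q.2 - q.1) ^ (p - 2)) := by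
  have hconst : 0 < p * (p - 1) := mul_pos (by linarith) (by linarith)
  rw [← lintegral_setLIntegral_openTriangle_pinv hF hG (by fun_prop),
    ← lintegral_const_mul' _ _ ENNReal.ofReal_ne_top]
  refine lintegral_congr fun u ↦ ?_
  rw [setLIntegral_openTriangle_rpow (by linarith), ← ENNReal.ofReal_mul hconst.le,
    show p - 2 + 2 = p by ring, show (p - 2 + 1) * p = p * (p - 1) by ring,
    mul_div_cancel₀ _ hconst.ne']

end IsDistributionFunction

theorem cdfOf_eq_cdf (μ : Measure ℝ) [IsProbabilityMeasure μ] :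
    cdfOf μ = ProbabilityTheory.cdf μ :=
  funext fun x ↦ (ProbabilityTheory.cdf_eq_real μ x).symm

theorem isDistributionFunction_cdfOf (μ : Measure ℝ) [IsProbabilityMeasure μ] :
    IsDistributionFunction (cdfOf μ) 0 1 := by
  rw [cdfOf_eq_cdf]
  exact ⟨ProbabilityTheory.monotone_cdf μ, ProbabilityTheory.tendsto_cdf_atBot μ,
    ProbabilityTheory.tendsto_cdf_atTop μ⟩

theorem wasserstein_double_integral_formula_general {F G : ℝ → ℝ} {a b p : ℝ}
    (hF : IsDistributionFunction F a b) (hG : IsDistributionFunction G a b) (hp : 1 < p) :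
    ∫⁻ u in Ioo a b, ENNReal.ofReal (|pinv F u - pinv G u| ^ p) =
      ENNReal.ofReal (p * (p - 1)) *
        ∫⁻ q in {q : ℝ × ℝ | q.1 < q.2},
          ENNReal.ofReal
            ((max (G q.1 - F q.2) 0 + max (F q.1 - G q.2) 0) * (q.2 - q.1) ^ (p - 2)) := by
  have hF_meas := hF.monotone.measurable
  have hG_meas := hG.monotone.measurable
  have hF_pinv := hF.aemeasurable_pinv
  have hG_pinv := hG.aemeasurable_pinv
  simp only [ofReal_abs_rpow_eq_add (zero_lt_one.trans hp).ne', neg_sub]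
  rw [lintegral_add_left' (by fun_prop), hF.lintegral_max_pinv_sub_rpow hG hp,
    hG.lintegral_max_pinv_sub_rpow hF hp, ← mul_add, ← lintegral_add_left (by fun_prop)]
  congr 1
  refine setLIntegral_congr_fun (measurableSet_lt measurable_fst measurable_snd) fun q hq ↦ ?_
  exact (ofReal_max_add_max_mul (Real.rpow_nonneg (sub_nonneg.2 (le_of_lt hq)) _) _ _).symm

/-- For cdfs `F`, `G` of probability measures and `p > 1`, as an identity in `[0,∞]`:
`∫₀¹ |F⁻¹(u) - G⁻¹(u)|^p du
  = p(p-1) ∫∫_{x<y} ([G(x)-F(y)]⁺ + [F(x)-G(y)]⁺) (y-x)^{p-2} dx dy`. -/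
theorem wasserstein_double_integral_formula
    (μ ν : Measure ℝ) [IsProbabilityMeasure μ] [IsProbabilityMeasure ν]
    (F G : ℝ → ℝ) (hF : F = cdfOf μ) (hG : G = cdfOf ν)
    (p : ℝ) (hp : 1 < p) :
    (∫⁻ u in Set.Ioo (0:ℝ) 1, ENNReal.ofReal (|pinv F u - pinv G u| ^ p))
      = ENNReal.ofReal (p * (p - 1)) *
        ∫⁻ q in {q : ℝ × ℝ | q.1 < q.2},
          ENNReal.ofReal
            ((max (G q.1 - F q.2) 0 + max (F q.1 - G q.2) 0) * (q.2 - q.1) ^ (p - 2)) := by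
  subst hF hG
  exact wasserstein_double_integral_formula_general (isDistributionFunction_cdfOf μ)
    (isDistributionFunction_cdfOf ν) hp
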